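/- arXiv:2512.10204 — 3 statements merged into one kernel-verified Lean document; each statement's English description precedes it below -/
import Mathlib

section
/- Let Ω ⊆ ℝᵈ be open, let x ∈ Ω, and let ψ : Ω → ℝ be Lipschitz continuous on a neighborhood of x. Let D ⊆ ℝᵈ and D_ψ ⊆ ℝᵈ be Lebesgue-null sets such that ψ is (Fréchet) differentiable at every point of Ω \ D_ψ. Then, identifying the Clarke subdifferential ∂ψ(x) with a subset of ℝᵈ via gradients, ∂ψ(x) equals the convex hull of the set of all limits lim_{k→∞} ∇ψ(x_k), taken over all sequences (x_k) ⊆ Ω \ (D ∪ D_ψ) with x_k → x for which the sequence of gradients (∇ψ(x_k)) converges. -/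
open Filter Topology MeasureTheory RealInnerProductSpace

/-- The Clarke (generalized) directional derivative of `f` at `u` in direction `v`. -/
noncomputable def clarkeDeriv {X : Type*} [NormedAddCommGroup X] [NormedSpace ℝ X]
    (f : X → ℝ) (u v : X) : ℝ :=
  Filter.limsup (fun p : X × ℝ => (f (p.1 + p.2 • v) - f p.1) / p.2)
    ((𝓝 u) ×ˢ 𝓝[>] (0:ℝ))

section CompactConvexHull

variable {E : Type*} [AddCommGroup E] [Module ℝ E]

/-- A Carathéodory-type description of the convex hull by a bounded number of points. -/
theorem convexHull_eq_iUnion_image_stdSimplex [FiniteDimensional ℝ E] (s : Set E) :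
    convexHull ℝ s = ⋃ n ∈ Finset.range (Module.finrank ℝ E + 2),
      (fun p : (Fin n → ℝ) × (Fin n → E) => ∑ i, p.1 i • p.2 i) ''
        (stdSimplex ℝ (Fin n) ×ˢ Set.univ.pi fun _ => s) := by
  refine Set.Subset.antisymm (fun x hx => ?_) (Set.iUnion₂_subset fun n _ => ?_)
  · obtain ⟨ι, _, z, w, hz, hind, hw, hw1, rfl⟩ := eq_pos_convex_span_of_mem_convexHull hx
    let e := Fintype.equivFin ι
    refine Set.mem_iUnion₂.2 ⟨Fintype.card ι, ?_, ⟨w ∘ e.symm, z ∘ e.symm⟩, ⟨⟨?_, ?_⟩, ?_⟩, ?_⟩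
    · have h₁ := hind.card_le_finrank_succ
      have h₂ := Submodule.finrank_le (vectorSpan ℝ (Set.range z))
      rw [Finset.mem_range]
      omega
    · exact fun i => (hw _).le
    · rw [← hw1]
      exact e.symm.sum_comp w
    · exact fun i _ => hz ⟨_, rfl⟩
    · exact e.symm.sum_comp fun i => w i • z i
  · rintro _ ⟨⟨w, z⟩, ⟨hw, hz⟩, rfl⟩
    exact (convex_convexHull ℝ s).sum_mem (fun i _ => hw.1 i) hw.2
      fun i _ => subset_convexHull ℝ s (hz i trivial)

theorem IsCompact.isCompact_convexHull [FiniteDimensional ℝ E] [TopologicalSpace E]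
    [ContinuousAdd E] [ContinuousSMul ℝ E] {s : Set E} (hs : IsCompact s) :
    IsCompact (convexHull ℝ s) := by
  rw [convexHull_eq_iUnion_image_stdSimplex]
  refine Finset.isCompact_biUnion _ fun n _ => ?_
  exact ((isCompact_stdSimplex ℝ (Fin n)).prod (isCompact_univ_pi fun _ => hs)).image
    (by fun_prop)

end CompactConvexHull

section LineIncrement

variable {E : Type*} [NormedAddCommGroup E] [NormedSpace ℝ E] [FiniteDimensional ℝ E]
  [MeasurableSpace E] [BorelSpace E] (μ : Measure E) [μ.IsAddHaarMeasure]

/-- Almost every line in a fixed direction meets a null set in a null set. -/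
theorem ae_ae_add_smul_notMem {N : Set E} (hN : μ N = 0) (w : E) :
    ∀ᵐ y ∂μ, ∀ᵐ t : ℝ, y + t • w ∉ N := by
  obtain ⟨M, hNM, hM, hM0⟩ := exists_measurable_superset_of_null hN
  have key : ∀ᵐ y ∂μ, ∀ᵐ t : ℝ, y + t • w ∉ M := by
    have hmeas : Measurable fun p : E × ℝ => p.1 + p.2 • w := by fun_prop
    refine (Measure.ae_ae_comm (p := fun (y : E) (t : ℝ) => y + t • w ∉ M)
      (hmeas hM.compl)).2 (Eventually.of_forall fun t => ?_)
    have h0 : μ ((fun y => y + t • w) ⁻¹' M) = 0 := by rw [measure_preimage_add_right, hM0]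
    exact measure_eq_zero_iff_ae_notMem.1 h0
  filter_upwards [key] with y hy
  filter_upwards [hy] with t ht using fun h => ht (hNM h)

theorem sub_le_mul_of_ae_fderiv_le {f : E → ℝ} {C : NNReal} {U N : Set E} (hUc : Convex ℝ U)
    (hUo : IsOpen U) (hf : LipschitzOnWith C f U) (hN : μ N = 0) {w : E} {c : ℝ}
    (h : ∀ z ∈ U \ N, DifferentiableAt ℝ f z ∧ fderiv ℝ f z w ≤ c)
    {y : E} {t : ℝ} (ht : 0 ≤ t) (hy : y ∈ U) (hyt : y + t • w ∈ U) :
    f (y + t • w) - f y ≤ c * t := by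
  have good : ∀ z, (∀ᵐ s : ℝ, z + s • w ∉ N) → z ∈ U → z + t • w ∈ U →
      f (z + t • w) - f z ≤ c * t := by
    intro z hz hzU hztU
    have hseg : ∀ s ∈ Set.Icc 0 t, z + s • w ∈ U := by
      intro s hs
      rcases ht.eq_or_lt with rfl | htpos
      · obtain rfl : s = 0 := le_antisymm hs.2 hs.1
        simpa using hzU
      · have := hUc.add_smul_mem hzU hztU (t := s / t)
          ⟨div_nonneg hs.1 ht, div_le_one_of_le₀ hs.2 ht⟩
        rwa [smul_smul, div_mul_cancel₀ _ htpos.ne'] at this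
    have hlip : LipschitzOnWith (C * ‖w‖₊) (fun s : ℝ => f (z + s • w)) (Set.uIcc 0 t) := by
      rw [Set.uIcc_of_le ht]
      refine hf.comp (g := f) (f := fun s : ℝ => z + s • w) ?_ hseg
      refine LipschitzWith.lipschitzOnWith (LipschitzWith.of_dist_le_mul fun a b => ?_)
      simp [dist_eq_norm, ← sub_smul, norm_smul, mul_comm]
    have hac := hlip.absolutelyContinuousOnInterval
    have hint := hac.integral_deriv_eq_sub
    have hle : ∫ s in (0 : ℝ)..t, deriv (fun s : ℝ => f (z + s • w)) s ≤
        ∫ _ in (0 : ℝ)..t, c := by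
      refine intervalIntegral.integral_mono_ae_restrict ht hac.intervalIntegrable_deriv
        intervalIntegrable_const ?_
      filter_upwards [ae_restrict_of_ae hz, ae_restrict_mem measurableSet_Icc] with s hs hsI
      obtain ⟨hd, hc⟩ := h _ ⟨hseg s hsI, hs⟩
      have hline : HasDerivAt (fun s : ℝ => z + s • w) w s := by
        simpa using ((hasDerivAt_id s).smul_const w).const_add z
      exact (hd.hasFDerivAt.comp_hasDerivAt s hline).deriv.trans_le hc
    rw [hint] at hle
    simpa [mul_comm] using hle
  by_contra! hlt
  have hcont : ContinuousAt (fun z => f (z + t • w) - f z) y := by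
    have h₁ : ContinuousAt f y := hf.continuousOn.continuousAt (hUo.mem_nhds hy)
    have h₂ : ContinuousAt f (y + t • w) := hf.continuousOn.continuousAt (hUo.mem_nhds hyt)
    exact (h₂.comp (f := fun z => z + t • w) (by fun_prop)).sub h₁
  have hshift : ∀ᶠ z in 𝓝 y, z + t • w ∈ U :=
    (by fun_prop : ContinuousAt (fun z => z + t • w) y).eventually (hUo.mem_nhds hyt)
  have hfreq : ∃ᶠ z in 𝓝 y, ∀ᵐ s : ℝ, z + s • w ∉ N :=
    mem_closure_iff_frequently.1 (Measure.dense_of_ae (ae_ae_add_smul_notMem μ hN w) y)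
  obtain ⟨z, hz, hzlt, hzU, hztU⟩ := (hfreq.and_eventually
    ((hcont.eventually (lt_mem_nhds hlt)).and ((hUo.eventually_mem hy).and hshift))).exists
  exact hzlt.not_ge (good z hz hzU hztU)

end LineIncrement

section ClarkeDeriv

variable {E : Type*} [NormedAddCommGroup E]

theorem eventually_add_smul_mem [NormedSpace ℝ E] {s : Set E} {x : E} (hs : s ∈ 𝓝 x) (w : E) :
    ∀ᶠ p : E × ℝ in 𝓝 x ×ˢ 𝓝[>] (0 : ℝ), p.1 + p.2 • w ∈ s := by
  have hcont : Tendsto (fun p : E × ℝ => p.1 + p.2 • w) (𝓝 x ×ˢ 𝓝 0) (𝓝 x) := by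
    rw [← nhds_prod_eq]
    exact Continuous.tendsto' (by fun_prop) _ _ (by simp)
  exact (hcont.mono_left (prod_mono le_rfl nhdsWithin_le_nhds)).eventually hs

theorem eventually_abs_div_le_of_lipschitzOnWith [NormedSpace ℝ E] {f : E → ℝ} {C : NNReal}
    {s : Set E} {x : E} (hs : s ∈ 𝓝 x) (hf : LipschitzOnWith C f s) (w : E) :
    ∀ᶠ p : E × ℝ in 𝓝 x ×ˢ 𝓝[>] (0 : ℝ),
      |(f (p.1 + p.2 • w) - f p.1) / p.2| ≤ C * ‖w‖ := by
  filter_upwards [tendsto_fst.eventually hs, eventually_add_smul_mem hs w,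
    tendsto_snd.eventually self_mem_nhdsWithin] with p h₁ h₂ (hp : 0 < p.2)
  rw [abs_div, abs_of_pos hp, div_le_iff₀ hp]
  have := hf.dist_le_mul _ h₂ _ h₁
  simpa [Real.dist_eq, dist_eq_norm, norm_smul, abs_of_pos hp, mul_comm, mul_left_comm] using this

variable [InnerProductSpace ℝ E] [CompleteSpace E]

theorem norm_gradient_le_of_lipschitzOn {f : E → ℝ} {C : NNReal} {s : Set E} {y : E}
    (hs : s ∈ 𝓝 y) (hf : LipschitzOnWith C f s) : ‖gradient f y‖ ≤ C := by
  rw [gradient, LinearIsometryEquiv.norm_map]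
  exact norm_fderiv_le_of_lipschitzOn ℝ hs hf

/-- The existence of an approximating sequence in `A` is a cluster point condition. -/
theorem exists_seq_tendsto_iff_mapClusterPt {X Y : Type*} [TopologicalSpace X]
    [FirstCountableTopology X] [TopologicalSpace Y] [FirstCountableTopology Y]
    {g : X → Y} {A : Set X} {x : X} {ξ : Y} :
    (∃ u : ℕ → X, (∀ k, u k ∈ A) ∧ Tendsto u atTop (𝓝 x) ∧
      Tendsto (fun k => g (u k)) atTop (𝓝 ξ)) ↔ MapClusterPt ξ (𝓝[A] x) g := by
  constructor
  · rintro ⟨u, hA, hu, hg⟩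
    exact hg.mapClusterPt.of_comp
      (tendsto_nhdsWithin_iff.2 ⟨hu, Eventually.of_forall hA⟩)
  · intro h
    obtain ⟨u, hg, hu⟩ := h.exists_seq_tendsto
    obtain ⟨hux, hA⟩ := tendsto_nhdsWithin_iff.1 hu
    obtain ⟨n, hn⟩ := eventually_atTop.1 hA
    exact ⟨fun k => u (k + n), fun k => hn _ (Nat.le_add_left n k),
      hux.comp (tendsto_add_atTop_nat n), hg.comp (tendsto_add_atTop_nat n)⟩

theorem inner_le_clarkeDeriv_of_mapClusterPt {f : E → ℝ} {C : NNReal} {s A : Set E} {x ξ : E}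
    (hs : s ∈ 𝓝 x) (hf : LipschitzOnWith C f s) (hA : ∀ y ∈ A, DifferentiableAt ℝ f y)
    (hξ : MapClusterPt ξ (𝓝[A] x) (gradient f)) (w : E) :
    ⟪ξ, w⟫ ≤ clarkeDeriv f x w := by
  refine le_of_forall_lt fun c hc => ?_
  obtain ⟨c', hcc', hc'⟩ := exists_between hc
  refine hcc'.trans_le (le_limsup_of_frequently_le ?_
    (isBoundedUnder_of_eventually_le
      ((eventually_abs_div_le_of_lipschitzOnWith hs hf w).mono fun p hp => (abs_le.1 hp).2)))
  intro hnot
  have hcurry := (hnot.curry.filter_mono nhdsWithin_le_nhds : ∀ᶠ y in 𝓝[A] x, _)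
  have hfreq : ∃ᶠ y in 𝓝[A] x, c' < ⟪gradient f y, w⟫ :=
    hξ.frequently ((by fun_prop : ContinuousAt (fun η : E => ⟪η, w⟫) ξ).eventually
      (lt_mem_nhds hc'))
  obtain ⟨y, hy, hyn, hyA⟩ := (hfreq.and_eventually
    (hcurry.and eventually_mem_nhdsWithin)).exists
  rw [inner_gradient_left] at hy
  have hlim := ((hA y hyA).hasFDerivAt.hasLineDerivAt w).tendsto_slope_zero_right
  obtain ⟨t, ht, htn⟩ := ((hlim.eventually (lt_mem_nhds hy)).and hyn).exists
  exact htn (ht.le.trans_eq (div_eq_inv_mul _ _).symm)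

theorem clarkeDeriv_le_of_forall_mapClusterPt [FiniteDimensional ℝ E] [MeasurableSpace E]
    [BorelSpace E] (μ : Measure E) [μ.IsAddHaarMeasure]
    {f : E → ℝ} {C : NNReal} {s Ω N : Set E} {x : E}
    (hs : s ∈ 𝓝 x) (hf : LipschitzOnWith C f s) (hΩ : Ω ∈ 𝓝 x) (hN : μ N = 0)
    (hdiff : ∀ y ∈ Ω \ N, DifferentiableAt ℝ f y) {w : E} {c : ℝ}
    (hc : ∀ ξ, MapClusterPt ξ (𝓝[Ω \ N] x) (gradient f) → ⟪ξ, w⟫ < c) :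
    clarkeDeriv f x w ≤ c := by
  have hK : IsCompact (Metric.closedBall (0 : E) C ∩ {η : E | c ≤ ⟪η, w⟫}) :=
    (isCompact_closedBall 0 _).inter_right (isClosed_le continuous_const (by fun_prop))
  have hev : ∀ᶠ y in 𝓝[Ω \ N] x, ⟪gradient f y, w⟫ ≤ c := by
    by_contra hnot
    have hbd : ∀ᶠ y in 𝓝[Ω \ N] x, ‖gradient f y‖ ≤ C :=
      ((eventually_eventually_nhds.2 hs).filter_mono nhdsWithin_le_nhds).mono
        fun y hy => norm_gradient_le_of_lipschitzOn hy hf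
    obtain ⟨ξ, hξ, hcl⟩ := hK.exists_mapClusterPt_of_frequently
      (((not_eventually.1 hnot).and_eventually hbd).mono fun y hy =>
        ⟨mem_closedBall_zero_iff.2 hy.2, (not_le.1 hy.1).le⟩)
    exact (hc ξ hcl).not_ge hξ.2
  obtain ⟨r, hr, hball⟩ := Metric.mem_nhds_iff.1
    (inter_mem (inter_mem hs hΩ) (eventually_nhdsWithin_iff.1 hev))
  have hU := Metric.ball_mem_nhds x hr
  refine limsup_le_of_le (IsBoundedUnder.isCoboundedUnder_le
    (isBoundedUnder_of_eventually_ge (a := -(C * ‖w‖))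
      ((eventually_abs_div_le_of_lipschitzOnWith hs hf w).mono fun p hp => (abs_le.1 hp).1))) ?_
  filter_upwards [tendsto_fst.eventually hU, eventually_add_smul_mem hU w,
    tendsto_snd.eventually self_mem_nhdsWithin] with p h₁ h₂ (hp : 0 < p.2)
  rw [div_le_iff₀ hp]
  refine sub_le_mul_of_ae_fderiv_le μ (convex_ball x r) Metric.isOpen_ball
    (hf.mono fun y hy => (hball hy).1.1) hN (fun z hz => ?_) hp.le h₁ h₂
  have hzA : z ∈ Ω \ N := ⟨(hball hz.1).1.2, hz.2⟩
  exact ⟨hdiff z hzA, inner_gradient_left (𝕜 := ℝ) (f := f) ▸ (hball hz.1).2 hzA⟩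

theorem isCompact_setOf_mapClusterPt_gradient [FiniteDimensional ℝ E]
    {f : E → ℝ} {C : NNReal} {s A : Set E} {x : E}
    (hs : s ∈ 𝓝 x) (hf : LipschitzOnWith C f s) :
    IsCompact {ξ | MapClusterPt ξ (𝓝[A] x) (gradient f)} := by
  refine (isCompact_closedBall (0 : E) C).of_isClosed_subset isClosed_setOfPred_clusterPt
    fun ξ hξ => ?_
  by_contra hnot
  have hbd : ∀ᶠ y in 𝓝[A] x, gradient f y ∈ Metric.closedBall (0 : E) C :=
    ((eventually_eventually_nhds.2 hs).filter_mono nhdsWithin_le_nhds).mono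
      fun y hy => mem_closedBall_zero_iff.2 (norm_gradient_le_of_lipschitzOn hy hf)
  obtain ⟨y, hy, hy'⟩ := ((MapClusterPt.frequently hξ
    (Metric.isClosed_closedBall.isOpen_compl.mem_nhds hnot)).and_eventually hbd).exists
  exact hy hy'

end ClarkeDeriv

theorem stmt6 {d : ℕ} (Ω : Set (EuclideanSpace ℝ (Fin d))) (hΩ : IsOpen Ω)
    (x : EuclideanSpace ℝ (Fin d)) (hx : x ∈ Ω)
    (ψ : EuclideanSpace ℝ (Fin d) → ℝ)
    (hψ : ∃ (L : NNReal) (s : Set (EuclideanSpace ℝ (Fin d))), s ∈ 𝓝 x ∧ LipschitzOnWith L ψ s)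
    (D Dψ : Set (EuclideanSpace ℝ (Fin d)))
    (hD : volume D = 0) (hDψ : volume Dψ = 0)
    (hdiff : ∀ y ∈ Ω \ Dψ, DifferentiableAt ℝ ψ y) :
    {ξ : EuclideanSpace ℝ (Fin d) | ∀ w, ⟪ξ, w⟫ ≤ clarkeDeriv ψ x w}
      = convexHull ℝ {ξ : EuclideanSpace ℝ (Fin d) |
          ∃ xk : ℕ → EuclideanSpace ℝ (Fin d),
            (∀ k, xk k ∈ Ω \ (D ∪ Dψ)) ∧ Tendsto xk atTop (𝓝 x) ∧
            Tendsto (fun k => gradient ψ (xk k)) atTop (𝓝 ξ)} := by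
  obtain ⟨L, s, hs, hL⟩ := hψ
  have hN : volume (D ∪ Dψ) = 0 := measure_union_null hD hDψ
  have hA : ∀ y ∈ Ω \ (D ∪ Dψ), DifferentiableAt ℝ ψ y :=
    fun y hy => hdiff y ⟨hy.1, fun h => hy.2 (Or.inr h)⟩
  simp only [exists_seq_tendsto_iff_mapClusterPt]
  refine Set.Subset.antisymm (fun ξ hξ => ?_) (convexHull_min (fun ξ hξ w => ?_) ?_)
  · by_contra hnot
    obtain ⟨φ, u, hφ, hu⟩ := geometric_hahn_banach_closed_point (convex_convexHull ℝ _)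
      (isCompact_setOf_mapClusterPt_gradient hs hL).isCompact_convexHull.isClosed hnot
    obtain ⟨w, rfl⟩ := (InnerProductSpace.toDual ℝ (EuclideanSpace ℝ (Fin d))).surjective φ
    simp only [InnerProductSpace.toDual_apply_apply] at hφ hu
    have hle : clarkeDeriv ψ x w ≤ u :=
      clarkeDeriv_le_of_forall_mapClusterPt volume hs hL (hΩ.mem_nhds hx) hN hA fun η hη =>
        real_inner_comm η w ▸ hφ η (subset_convexHull ℝ _ hη)
    rw [real_inner_comm] at hu
    exact (hu.trans_le (hξ w)).not_ge hle
  · exact inner_le_clarkeDeriv_of_mapClusterPt hs hL hA hξ w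
  · simp only [Set.ofPred_forall]
    exact convex_iInter fun w => convex_halfSpace_le
      ⟨fun a b => inner_add_left a b w, fun c a => real_inner_smul_left a w c⟩ _
end

section
/- Assume the abstract VHI data hypotheses with α_Ψ < m_A. Then there exists θ₀ > 0 such that for every θ ∈ (0, θ₀): (i) for each w ∈ K the auxiliary inequality problem—find u ∈ K such that (u, v − u)_V + θ[Φ(v) − Φ(u) + Ψ⁰(u; v − u)] ≥ (w, v − u)_V − θ[⟨Aw, v − u⟩ − ⟨f, v − u⟩] for all v ∈ K—admits a unique solution u =: T_θ(w) ∈ K; and (ii) the map T_θ : K → K is a contraction, i.e., there is a constant k ∈ [0,1) with ‖T_θ(w₁) − T_θ(w₂)‖_V ≤ k‖w₁ − w₂‖_V for all w₁, w₂ ∈ K. -/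
open Filter Topology RealInnerProductSpace

section ClarkeDerivative

variable {X : Type*} [NormedAddCommGroup X] [NormedSpace ℝ X] {Ψ : X → ℝ}

/-- The difference quotients of a locally Lipschitz function are eventually bounded. -/
lemma LocallyLipschitz.eventually_abs_quotient_le (hΨ : LocallyLipschitz Ψ) (u v : X) :
    ∃ C : ℝ, ∀ᶠ p : X × ℝ in (𝓝 u) ×ˢ 𝓝[>] (0:ℝ),
      |(Ψ (p.1 + p.2 • v) - Ψ p.1) / p.2| ≤ C := by
  obtain ⟨L, s, hs, hL⟩ := hΨ u
  refine ⟨L * ‖v‖, ?_⟩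
  have h1 : Tendsto (fun p : X × ℝ => p.1) ((𝓝 u) ×ˢ 𝓝[>] (0:ℝ)) (𝓝 u) := tendsto_fst
  have h2 : Tendsto (fun p : X × ℝ => p.2) ((𝓝 u) ×ˢ 𝓝[>] (0:ℝ)) (𝓝[>] 0) := tendsto_snd
  have h3 : Tendsto (fun p : X × ℝ => p.1 + p.2 • v) ((𝓝 u) ×ˢ 𝓝[>] (0:ℝ)) (𝓝 u) := by
    simpa using h1.add ((h2.mono_right nhdsWithin_le_nhds).smul_const v)
  filter_upwards [h1 hs, h3 hs, h2 self_mem_nhdsWithin] with p hp1 hp3 hp2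
  have hpos : 0 < p.2 := hp2
  have h := hL.norm_sub_le hp3 hp1
  rw [add_sub_cancel_left, norm_smul, Real.norm_eq_abs, Real.norm_eq_abs, abs_of_pos hpos] at h
  rw [abs_div, abs_of_pos hpos, div_le_iff₀ hpos]
  linarith

lemma LocallyLipschitz.eventually_quotient_lt (hΨ : LocallyLipschitz Ψ) {u v : X} {r : ℝ}
    (hr : clarkeDeriv Ψ u v < r) :
    ∀ᶠ p : X × ℝ in (𝓝 u) ×ˢ 𝓝[>] (0:ℝ), (Ψ (p.1 + p.2 • v) - Ψ p.1) / p.2 < r := by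
  obtain ⟨C, hC⟩ := hΨ.eventually_abs_quotient_le u v
  exact eventually_lt_of_limsup_lt hr
    (isBoundedUnder_of_eventually_le (hC.mono fun p hp => (abs_le.1 hp).2))

lemma LocallyLipschitz.clarkeDeriv_le (hΨ : LocallyLipschitz Ψ) {u v : X} {r : ℝ}
    (hr : ∀ᶠ p : X × ℝ in (𝓝 u) ×ˢ 𝓝[>] (0:ℝ), (Ψ (p.1 + p.2 • v) - Ψ p.1) / p.2 ≤ r) :
    clarkeDeriv Ψ u v ≤ r := by
  obtain ⟨C, hC⟩ := hΨ.eventually_abs_quotient_le u v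
  have hb : IsBoundedUnder (· ≥ ·) ((𝓝 u) ×ˢ 𝓝[>] (0:ℝ))
      (fun p : X × ℝ => (Ψ (p.1 + p.2 • v) - Ψ p.1) / p.2) :=
    isBoundedUnder_of_eventually_ge (hC.mono fun p hp => (abs_le.1 hp).1)
  exact limsup_le_of_le hb.isCoboundedUnder_le hr

/-- Half of the positive homogeneity of the Clarke derivative. -/
lemma LocallyLipschitz.mul_clarkeDeriv_le (hΨ : LocallyLipschitz Ψ) (u v : X) {c : ℝ}
    (hc : 0 < c) : c * clarkeDeriv Ψ u v ≤ clarkeDeriv Ψ u (c • v) := by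
  refine le_of_forall_gt_imp_ge_of_dense fun r hr => ?_
  rw [mul_comm, ← le_div_iff₀ hc]
  apply hΨ.clarkeDeriv_le
  have ht : Tendsto (fun p : X × ℝ => (p.1, c⁻¹ * p.2)) ((𝓝 u) ×ˢ 𝓝[>] (0:ℝ))
      ((𝓝 u) ×ˢ 𝓝[>] (0:ℝ)) := by
    refine tendsto_fst.prodMk (tendsto_nhdsWithin_iff.2 ⟨?_, ?_⟩)
    · have h2 : Tendsto (fun p : X × ℝ => p.2) ((𝓝 u) ×ˢ 𝓝[>] (0:ℝ)) (𝓝 0) :=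
        tendsto_snd.mono_right nhdsWithin_le_nhds
      simpa using h2.const_mul c⁻¹
    · have h2 : Tendsto (fun p : X × ℝ => p.2) ((𝓝 u) ×ˢ 𝓝[>] (0:ℝ)) (𝓝[>] 0) := tendsto_snd
      filter_upwards [h2 self_mem_nhdsWithin] with p hp
      exact mul_pos (inv_pos.2 hc) hp
  filter_upwards [ht.eventually (hΨ.eventually_quotient_lt hr)] with p hp
  have e : (c⁻¹ * p.2) • c • v = p.2 • v := by
    rw [smul_smul]; congr 1; field_simp
  rw [e] at hp
  rw [le_div_iff₀ hc]
  refine le_trans (le_of_eq ?_) hp.le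
  field_simp

lemma LocallyLipschitz.eventually_ray_quotient_lt (hΨ : LocallyLipschitz Ψ) {u v : X} {r : ℝ}
    (hr : clarkeDeriv Ψ u v < r) :
    ∀ᶠ t : ℝ in 𝓝[>] (0:ℝ), (Ψ (u + t • v) - Ψ u) / t < r := by
  have ht : Tendsto (fun t : ℝ => (u, t)) (𝓝[>] (0:ℝ)) ((𝓝 u) ×ˢ 𝓝[>] (0:ℝ)) :=
    tendsto_const_nhds.prodMk tendsto_id
  exact ht.eventually (hΨ.eventually_quotient_lt hr)

/-- A mean value inequality along a ray, with an affine bound on the Clarke derivative. -/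
lemma LocallyLipschitz.le_of_clarkeDeriv_le (hΨ : LocallyLipschitz Ψ) {x d : X} {r q c : ℝ}
    (hc : 0 ≤ c)
    (h : ∀ s ∈ Set.Ico 0 c, clarkeDeriv Ψ (x + s • d) d ≤ r + q * s) :
    Ψ (x + c • d) ≤ Ψ x + r * c + q * c ^ 2 / 2 := by
  have hcont : Continuous fun t : ℝ => Ψ (x + t • d) :=
    hΨ.continuous.comp (by fun_prop)
  have hB : ∀ t : ℝ, HasDerivAt (fun t : ℝ => Ψ x + r * t + q * t ^ 2 / 2) (r + q * t) t := by
    intro t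
    have h1 := (((hasDerivAt_id t).const_mul r).const_add (Ψ x)).add
      ((((hasDerivAt_id t).pow 2).const_mul q).div_const 2)
    refine h1.congr_deriv ?_
    simp
    ring
  refine image_le_of_liminf_slope_right_le_deriv_boundary (f := fun t : ℝ => Ψ (x + t • d))
    (a := 0) (b := c) (B := fun t : ℝ => Ψ x + r * t + q * t ^ 2 / 2)
    (B' := fun t => r + q * t) hcont.continuousOn (by simp)
    (fun t _ => (hB t).continuousAt.continuousWithinAt) (fun t _ => (hB t).hasDerivWithinAt) ?_
    (Set.right_mem_Icc.2 hc)
  intro s hs ρ hρ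
  have ht : Tendsto (fun z : ℝ => z - s) (𝓝[>] s) (𝓝[>] 0) := by
    refine tendsto_nhdsWithin_iff.2 ⟨?_, ?_⟩
    · have : Tendsto (fun z : ℝ => z - s) (𝓝 s) (𝓝 (s - s)) :=
        tendsto_id.sub tendsto_const_nhds
      rw [sub_self] at this
      exact this.mono_left nhdsWithin_le_nhds
    · filter_upwards [self_mem_nhdsWithin] with z hz
      exact sub_pos.2 (Set.mem_Ioi.1 hz)
  refine Eventually.frequently ?_
  filter_upwards [ht.eventually (hΨ.eventually_ray_quotient_lt ((h s hs).trans_lt hρ))] with z hz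
  have e : x + s • d + (z - s) • d = x + z • d := by rw [sub_smul]; abel
  rw [e] at hz
  rwa [slope_def_field]

/-- A locally Lipschitz function with `α`-relaxed monotone Clarke derivative is weakly convex. -/
lemma LocallyLipschitz.strongConvexOn_neg (hΨ : LocallyLipschitz Ψ) {α : ℝ}
    (hmon : ∀ v₁ v₂ : X,
      clarkeDeriv Ψ v₁ (v₂ - v₁) + clarkeDeriv Ψ v₂ (v₁ - v₂) ≤ α * ‖v₁ - v₂‖ ^ 2) :
    StrongConvexOn Set.univ (-α) Ψ := by
  refine ⟨convex_univ, ?_⟩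
  intro x _ y _ a b ha hb hab
  rcases ha.eq_or_lt with rfl | ha
  · obtain rfl : b = 1 := by linarith
    simp
  rcases hb.eq_or_lt with rfl | hb
  · obtain rfl : a = 1 := by linarith
    simp
  obtain rfl : a = 1 - b := by linarith
  set d := y - x with hd
  have key : ∀ s t : ℝ, s < t →
      clarkeDeriv Ψ (x + s • d) d + clarkeDeriv Ψ (x + t • d) (-d) ≤ α * ‖d‖ ^ 2 * (t - s) := by
    intro s t hst
    have hpos : 0 < t - s := sub_pos.2 hst
    have h := hmon (x + s • d) (x + t • d)
    have e1 : x + t • d - (x + s • d) = (t - s) • d := by rw [sub_smul]; abel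
    have e2 : x + s • d - (x + t • d) = (t - s) • -d := by rw [smul_neg, sub_smul]; abel
    rw [e1, e2, norm_smul, norm_neg, Real.norm_eq_abs, abs_of_pos hpos] at h
    have h1 := hΨ.mul_clarkeDeriv_le (x + s • d) d hpos
    have h2 := hΨ.mul_clarkeDeriv_le (x + t • d) (-d) hpos
    refine le_of_mul_le_mul_left ?_ hpos
    calc _ ≤ α * ((t - s) * ‖d‖) ^ 2 := by linarith
      _ = _ := by ring
  set β := α * ‖d‖ ^ 2 with hβ
  obtain ⟨r, hr1, hr2⟩ : ∃ r : ℝ, (∀ s ∈ Set.Ico 0 b, clarkeDeriv Ψ (x + s • d) d + β * s ≤ r) ∧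
      ∀ t, b < t → r ≤ β * t - clarkeDeriv Ψ (x + t • d) (-d) := by
    let S := (fun s => clarkeDeriv Ψ (x + s • d) d + β * s) '' Set.Ico 0 b
    have hub : ∀ t, b < t → β * t - clarkeDeriv Ψ (x + t • d) (-d) ∈ upperBounds S := by
      rintro t ht _ ⟨s, hs, rfl⟩
      have := key s t (hs.2.trans ht)
      dsimp only
      linarith
    refine ⟨sSup S, fun s hs => le_csSup ⟨_, hub (b + 1) (by linarith)⟩ ⟨s, hs, rfl⟩, ?_⟩
    intro t ht
    exact csSup_le ⟨_, 0, ⟨le_rfl, hb⟩, rfl⟩ (hub t ht)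
  have m1 := hΨ.le_of_clarkeDeriv_le (x := x) (d := d) (r := r) (q := -β) hb.le
    (fun s hs => by linarith [hr1 s hs])
  have m2 := hΨ.le_of_clarkeDeriv_le (x := y) (d := -d) (r := β - r) (q := -β) ha.le
    (fun s hs => by
      have h := hr2 (1 - s) (by linarith [hs.2])
      have e : x + (1 - s) • d = y + s • -d := by
        rw [hd, sub_smul, smul_neg, one_smul]; abel
      rw [e] at h
      linarith)
  have e1 : (1 - b) • x + b • y = x + b • d := by rw [hd]; module
  have e2 : y + (1 - b) • -d = x + b • d := by rw [hd]; module
  rw [e2] at m2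
  rw [e1, norm_sub_rev x y, ← hd, smul_eq_mul, smul_eq_mul]
  have n1 := mul_le_mul_of_nonneg_left m1 ha.le
  have n2 := mul_le_mul_of_nonneg_left m2 hb.le
  have e3 : (1 - b) * b * (-α / 2 * ‖d‖ ^ 2) = -((1 - b) * b * β / 2) := by rw [hβ]; ring
  rw [e3]
  nlinarith

end ClarkeDerivative

section Minimization

variable {E : Type*} [NormedAddCommGroup E] [NormedSpace ℝ E] {J : E → ℝ} {K : Set E} {m : ℝ}

lemma StrongConvexOn.bddBelow_image (hJ : StrongConvexOn K m J) (hm : 0 < m)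
    (hcont : Continuous J) : BddBelow (J '' K) := by
  rcases K.eq_empty_or_nonempty with rfl | ⟨x, hx⟩
  · simp
  obtain ⟨δ, hδ, hball⟩ : ∃ δ > 0, ∀ z, dist z x ≤ δ → J x - 1 ≤ J z := by
    have h : ∀ᶠ z in 𝓝 x, J x - 1 < J z :=
      hcont.continuousAt.eventually (lt_mem_nhds (by linarith))
    obtain ⟨ε, hε, h⟩ := Metric.eventually_nhds_iff.1 h
    exact ⟨ε / 2, by positivity, fun z hz => (h (by linarith)).le⟩
  set β := 1 / δ + m * δ / 2 with hβ
  refine ⟨J x - 1 - β ^ 2 / (2 * m), ?_⟩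
  rintro _ ⟨v, hv, rfl⟩
  have hβm : 0 ≤ β ^ 2 / (2 * m) := by positivity
  rcases le_or_gt (dist v x) δ with h | h
  · linarith [hball v h]
  set R := dist v x with hR
  have hRpos : 0 < R := hδ.trans h
  have ht0 : 0 ≤ δ / R := by positivity
  have ht1 : δ / R ≤ 1 := (div_le_one hRpos).2 h.le
  have h1 := hJ.2 hx hv (sub_nonneg.2 ht1) ht0 (by ring)
  have h2 := hball ((1 - δ / R) • x + (δ / R) • v) (by
    have e : (1 - δ / R) • x + (δ / R) • v - x = (δ / R) • (v - x) := by module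
    rw [dist_eq_norm, e, norm_smul, ← dist_eq_norm, ← hR, Real.norm_of_nonneg ht0,
      div_mul_cancel₀ _ hRpos.ne'])
  rw [← dist_eq_norm, dist_comm x v, ← hR, smul_eq_mul, smul_eq_mul] at h1
  have h3 : (δ / R) * (J x - R / δ + (1 - δ / R) * (m / 2 * R ^ 2)) ≤ (δ / R) * J v := by
    have e : (δ / R) * (R / δ) = 1 := by field_simp
    linear_combination h1 + h2 - e
  have h4 := le_of_mul_le_mul_left h3 (by positivity)
  have e4 : J x - R / δ + (1 - δ / R) * (m / 2 * R ^ 2) =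
      J x + (m * R - β) ^ 2 / (2 * m) - β ^ 2 / (2 * m) := by
    rw [hβ]; field_simp; ring
  have h5 : 0 ≤ (m * R - β) ^ 2 / (2 * m) := by positivity
  linarith

/-- A continuous strongly convex function attains its minimum on a nonempty closed set of a
complete space. -/
lemma StrongConvexOn.exists_isMinOn [CompleteSpace E] (hJ : StrongConvexOn K m J) (hm : 0 < m)
    (hcont : Continuous J) (hne : K.Nonempty) (hcl : IsClosed K) :
    ∃ u ∈ K, ∀ v ∈ K, J u ≤ J v := by
  have hbdd := hJ.bddBelow_image hm hcont
  set I := sInf (J '' K) with hI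
  have hle : ∀ v ∈ K, I ≤ J v := fun v hv => csInf_le hbdd ⟨v, hv, rfl⟩
  have hseq : ∀ n : ℕ, ∃ v ∈ K, J v < I + 1 / ((n : ℝ) + 1) := by
    intro n
    obtain ⟨_, ⟨v, hv, rfl⟩, h⟩ := exists_lt_of_csInf_lt (hne.image J)
      (show sInf (J '' K) < I + 1 / ((n : ℝ) + 1) by
        have : 0 < 1 / ((n : ℝ) + 1) := by positivity
        linarith)
    exact ⟨v, hv, h⟩
  choose x hxK hx using hseq
  have hlim : Tendsto (fun n : ℕ => 1 / ((n : ℝ) + 1)) atTop (𝓝 0) :=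
    tendsto_one_div_add_atTop_nhds_zero_nat
  have hcauchy : CauchySeq x := by
    refine cauchySeq_of_le_tendsto_0 (fun n : ℕ => √(8 / m * (1 / ((n : ℝ) + 1)))) ?_ ?_
    · intro n k N hn hk
      have hn' : J (x n) ≤ I + 1 / ((N : ℝ) + 1) :=
        (hx n).le.trans (by gcongr)
      have hk' : J (x k) ≤ I + 1 / ((N : ℝ) + 1) :=
        (hx k).le.trans (by gcongr)
      have hhalf : (0 : ℝ) ≤ 1 / 2 := by norm_num
      have h1 := hJ.2 (hxK n) (hxK k) hhalf hhalf (by norm_num)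
      have h2 := hle _ (hJ.1 (hxK n) (hxK k) hhalf hhalf (by norm_num))
      rw [smul_eq_mul, smul_eq_mul] at h1
      rw [dist_eq_norm]
      refine Real.le_sqrt_of_sq_le ?_
      rw [div_mul_eq_mul_div, le_div_iff₀ hm]
      linarith
    · have h := (hlim.const_mul (8 / m)).sqrt
      simpa using h
  obtain ⟨u, hu⟩ := cauchySeq_tendsto_of_complete hcauchy
  refine ⟨u, hcl.mem_of_tendsto hu (Eventually.of_forall hxK), fun v hv => ?_⟩
  refine le_trans ?_ (hle v hv)
  refine le_of_tendsto_of_tendsto ((hcont.tendsto u).comp hu)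
    (by simpa using hlim.const_add I) (Eventually.of_forall fun n => (hx n).le)

end Minimization

section Inequality

variable {V : Type*} [NormedAddCommGroup V] [InnerProductSpace ℝ V]

/-- Existence for the regularized variational-hemivariational inequality with right-hand side
`g`. -/
lemma exists_hemivariational_solution [CompleteSpace V] {K : Set V} (hKne : K.Nonempty)
    (hKcl : IsClosed K) (hKcv : Convex ℝ K) {Φ Ψ : V → ℝ} (hΦcv : ConvexOn ℝ Set.univ Φ)
    (hΦcont : Continuous Φ) (hΨ : LocallyLipschitz Ψ) {α : ℝ}
    (hmon : ∀ v₁ v₂ : V,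
      clarkeDeriv Ψ v₁ (v₂ - v₁) + clarkeDeriv Ψ v₂ (v₁ - v₂) ≤ α * ‖v₁ - v₂‖ ^ 2)
    {θ : ℝ} (hθ : 0 < θ) (hθα : θ * α < 1) (g : V →L[ℝ] ℝ) :
    ∃ u ∈ K, ∀ v ∈ K,
      g (v - u) ≤ ⟪u, v - u⟫ + θ * (Φ v - Φ u + clarkeDeriv Ψ u (v - u)) := by
  let J : V → ℝ := fun v => ‖v‖ ^ 2 / 2 + θ * (Φ v + Ψ v) - g v
  have hJcont : Continuous J := by
    have := hΨ.continuous
    fun_prop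
  have hJ : StrongConvexOn K (1 - θ * α) J := by
    refine ⟨hKcv, fun x _ y _ a b ha hb hab => ?_⟩
    have h1 := hΦcv.2 (Set.mem_univ x) (Set.mem_univ y) ha hb hab
    have h2 := (hΨ.strongConvexOn_neg hmon).2 (Set.mem_univ x) (Set.mem_univ y) ha hb hab
    have h3 : ‖a • x + b • y‖ ^ 2 = a * ‖x‖ ^ 2 + b * ‖y‖ ^ 2 - a * b * ‖x - y‖ ^ 2 := by
      obtain rfl : a = 1 - b := by linarith
      rw [norm_add_sq_real, norm_sub_sq_real, norm_smul, norm_smul, real_inner_smul_left,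
        real_inner_smul_right, mul_pow, mul_pow, Real.norm_eq_abs, Real.norm_eq_abs, sq_abs,
        sq_abs]
      ring
    simp only [smul_eq_mul] at h1 h2
    simp only [J, map_add, map_smul, smul_eq_mul, h3]
    have h4 := mul_le_mul_of_nonneg_left (add_le_add h1 h2) hθ.le
    linear_combination h4
  obtain ⟨u, hu, hmin⟩ := hJ.exists_isMinOn (by linarith) hJcont hKne hKcl
  refine ⟨u, hu, fun v hv => ?_⟩
  set d := v - u with hd
  refine le_of_forall_pos_lt_add fun ε hε => ?_
  have hev := hΨ.eventually_ray_quotient_lt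
    (show clarkeDeriv Ψ u d < clarkeDeriv Ψ u d + ε / (2 * θ) by
      have : 0 < ε / (2 * θ) := by positivity
      linarith)
  have hlim : Tendsto (fun t : ℝ => t * (‖d‖ ^ 2 / 2)) (𝓝[>] (0:ℝ)) (𝓝 0) := by
    have h : Tendsto (fun t : ℝ => t * (‖d‖ ^ 2 / 2)) (𝓝 0) (𝓝 (0 * (‖d‖ ^ 2 / 2))) :=
      tendsto_id.mul_const _
    rw [zero_mul] at h
    exact h.mono_left nhdsWithin_le_nhds
  obtain ⟨t, ht1, ht2, ht3⟩ := (hev.and ((hlim.eventually (gt_mem_nhds (half_pos hε))).and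
    (Ioo_mem_nhdsGT (zero_lt_one (α := ℝ))))).exists
  have htpos : 0 < t := ht3.1
  have hc : (1 - t) • u + t • v = u + t • d := by rw [hd]; module
  have hJle := hmin (u + t • d)
    (hc ▸ hKcv hu hv (sub_nonneg.2 ht3.2.le) htpos.le (by ring))
  have hΦle := hΦcv.2 (Set.mem_univ u) (Set.mem_univ v) (sub_nonneg.2 ht3.2.le) htpos.le (by ring)
  rw [hc, smul_eq_mul, smul_eq_mul] at hΦle
  have hΨle : Ψ (u + t • d) - Ψ u ≤ t * (clarkeDeriv Ψ u d + ε / (2 * θ)) := by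
    rw [div_lt_iff₀ htpos] at ht1
    linarith
  have hnorm : ‖u + t • d‖ ^ 2 = ‖u‖ ^ 2 + 2 * t * ⟪u, d⟫ + t ^ 2 * ‖d‖ ^ 2 := by
    rw [norm_add_sq_real, norm_smul, real_inner_smul_right, mul_pow, Real.norm_eq_abs, sq_abs]
    ring
  simp only [J, map_add, map_smul, smul_eq_mul, hnorm] at hJle
  have h5 := mul_le_mul_of_nonneg_left (add_le_add hΦle hΨle) hθ.le
  have e5 : θ * (t * (ε / (2 * θ))) = t * (ε / 2) := by field_simp
  have h6 : t * g d ≤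
      t * (⟪u, d⟫ + t * (‖d‖ ^ 2 / 2) + θ * (Φ v - Φ u + clarkeDeriv Ψ u d) + ε / 2) := by
    linear_combination hJle + h5 + e5
  have h7 := le_of_mul_le_mul_left h6 htpos
  linarith

/-- Continuous dependence of solutions of the auxiliary problem on the datum `w`. -/
lemma norm_sub_le_of_hemivariational {K : Set V} {A : V → (V →L[ℝ] ℝ)} {LA mA α θ : ℝ}
    (hALip : ∀ v₁ v₂ : V, ‖A v₁ - A v₂‖ ≤ LA * ‖v₁ - v₂‖)
    (hAmon : ∀ v₁ v₂ : V, (A v₁ - A v₂) (v₁ - v₂) ≥ mA * ‖v₁ - v₂‖ ^ 2)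
    [CompleteSpace V] {Φ Ψ : V → ℝ}
    (hmon : ∀ v₁ v₂ : V,
      clarkeDeriv Ψ v₁ (v₂ - v₁) + clarkeDeriv Ψ v₂ (v₁ - v₂) ≤ α * ‖v₁ - v₂‖ ^ 2)
    (hθ : 0 < θ) (hθα : θ * α < 1) (f : V →L[ℝ] ℝ) {w₁ w₂ u₁ u₂ : V}
    (hu₁ : u₁ ∈ K) (hu₂ : u₂ ∈ K)
    (h₁ : ∀ v ∈ K, ⟪u₁, v - u₁⟫ + θ * (Φ v - Φ u₁ + clarkeDeriv Ψ u₁ (v - u₁)) ≥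
      ⟪w₁, v - u₁⟫ - θ * ((A w₁) (v - u₁) - f (v - u₁)))
    (h₂ : ∀ v ∈ K, ⟪u₂, v - u₂⟫ + θ * (Φ v - Φ u₂ + clarkeDeriv Ψ u₂ (v - u₂)) ≥
      ⟪w₂, v - u₂⟫ - θ * ((A w₂) (v - u₂) - f (v - u₂))) :
    ‖u₁ - u₂‖ ≤ √(1 - 2 * θ * mA + θ ^ 2 * LA ^ 2) / (1 - θ * α) * ‖w₁ - w₂‖ := by
  have hpos : 0 < 1 - θ * α := by linarith
  set a : V := (InnerProductSpace.toDual ℝ V).symm (A w₁ - A w₂) with ha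
  have hin : ∀ v, ⟪a, v⟫ = (A w₁ - A w₂) v := fun v =>
    InnerProductSpace.toDual_symm_apply
  have hna : ‖a‖ ≤ LA * ‖w₁ - w₂‖ := by
    rw [ha, LinearIsometryEquiv.norm_map]; exact hALip w₁ w₂
  have hz : ‖(w₁ - w₂) - θ • a‖ ≤ √(1 - 2 * θ * mA + θ ^ 2 * LA ^ 2) * ‖w₁ - w₂‖ := by
    rw [← Real.sqrt_sq (norm_nonneg (w₁ - w₂)), ← Real.sqrt_mul' _ (sq_nonneg _)]
    refine Real.le_sqrt_of_sq_le ?_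
    rw [norm_sub_sq_real, real_inner_smul_right, real_inner_comm, hin,
      norm_smul, mul_pow, Real.norm_eq_abs, sq_abs]
    have h3 := mul_le_mul_of_nonneg_left (hAmon w₁ w₂) hθ.le
    have h4 := mul_le_mul_of_nonneg_left (pow_le_pow_left₀ (norm_nonneg a) hna 2) (sq_nonneg θ)
    linear_combination 2 * h3 + h4
  have h12 : (1 - θ * α) * ‖u₁ - u₂‖ ^ 2 ≤ ⟪(w₁ - w₂) - θ • a, u₁ - u₂⟫ := by
    have g1 := h₁ u₂ hu₂
    have g2 := h₂ u₁ hu₁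
    have g3 := mul_le_mul_of_nonneg_left (hmon u₁ u₂) hθ.le
    rw [← real_inner_self_eq_norm_sq] at g3 ⊢
    simp only [inner_sub_left, inner_sub_right, real_inner_smul_left, hin,
      sub_apply, map_sub] at g1 g2 g3 ⊢
    linear_combination g1 + g2 + g3
  have h13 := h12.trans (real_inner_le_norm _ _)
  rw [div_mul_eq_mul_div, le_div_iff₀ hpos]
  rcases (norm_nonneg (u₁ - u₂)).eq_or_lt with h0 | h0
  · rw [← h0, zero_mul]; positivity
  · refine le_trans ?_ hz
    refine le_of_mul_le_mul_right ?_ h0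
    linarith

end Inequality

theorem stmt8 {V : Type*} [NormedAddCommGroup V] [InnerProductSpace ℝ V] [CompleteSpace V]
    (K : Set V) (hKne : K.Nonempty) (hKcl : IsClosed K) (hKcv : Convex ℝ K)
    (A : V → (V →L[ℝ] ℝ)) (LA : ℝ) (hLA : 0 < LA)
    (hALip : ∀ v₁ v₂ : V, ‖A v₁ - A v₂‖ ≤ LA * ‖v₁ - v₂‖)
    (mA : ℝ) (hmA : 0 < mA)
    (hAmon : ∀ v₁ v₂ : V, (A v₁ - A v₂) (v₁ - v₂) ≥ mA * ‖v₁ - v₂‖ ^ 2)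
    (Φ : V → ℝ) (hΦcv : ConvexOn ℝ Set.univ Φ) (hΦcont : Continuous Φ)
    (Ψ : V → ℝ)
    (hΨlip : ∀ u : V, ∃ (L : NNReal) (s : Set V), s ∈ 𝓝 u ∧ LipschitzOnWith L Ψ s)
    (αΨ : ℝ) (hαΨ : 0 ≤ αΨ)
    (hΨmon : ∀ v₁ v₂ : V,
      clarkeDeriv Ψ v₁ (v₂ - v₁) + clarkeDeriv Ψ v₂ (v₁ - v₂) ≤ αΨ * ‖v₁ - v₂‖ ^ 2)
    (f : V →L[ℝ] ℝ) (hsmall : αΨ < mA) :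
    ∃ θ₀ > (0:ℝ), ∀ θ : ℝ, 0 < θ → θ < θ₀ →
      ∃ T : V → V,
        (∀ w ∈ K, T w ∈ K ∧
          (∀ v ∈ K,
            ⟪T w, v - T w⟫ + θ * (Φ v - Φ (T w) + clarkeDeriv Ψ (T w) (v - T w)) ≥
              ⟪w, v - T w⟫ - θ * ((A w) (v - T w) - f (v - T w))) ∧
          (∀ u' ∈ K,
            (∀ v ∈ K,
              ⟪u', v - u'⟫ + θ * (Φ v - Φ u' + clarkeDeriv Ψ u' (v - u')) ≥
                ⟪w, v - u'⟫ - θ * ((A w) (v - u') - f (v - u'))) → u' = T w)) ∧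
        (∃ k : ℝ, 0 ≤ k ∧ k < 1 ∧
          ∀ w₁ ∈ K, ∀ w₂ ∈ K, ‖T w₁ - T w₂‖ ≤ k * ‖w₁ - w₂‖) := by
  have hΨ : LocallyLipschitz Ψ := hΨlip
  refine ⟨min (1 / (αΨ + 1)) (2 * (mA - αΨ) / LA ^ 2), ?_, fun θ hθ hθ₀ => ?_⟩
  · have : 0 < mA - αΨ := sub_pos.2 hsmall
    positivity
  have hθα : θ * αΨ < 1 := by
    have h := (lt_div_iff₀ (by positivity)).1 (hθ₀.trans_le (min_le_left _ _))
    linarith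
  have hθL : θ * LA ^ 2 < 2 * (mA - αΨ) :=
    (lt_div_iff₀ (by positivity)).1 (hθ₀.trans_le (min_le_right _ _))
  have hex : ∀ w : V, ∃ u ∈ K, ∀ v ∈ K,
      ⟪u, v - u⟫ + θ * (Φ v - Φ u + clarkeDeriv Ψ u (v - u)) ≥
        ⟪w, v - u⟫ - θ * ((A w) (v - u) - f (v - u)) := fun w =>
    exists_hemivariational_solution hKne hKcl hKcv hΦcv hΦcont hΨ hΨmon hθ hθα
      (innerSL ℝ w - θ • (A w - f))
  choose T hTK hT using hex
  refine ⟨T, fun w _ => ⟨hTK w, hT w, fun u' hu' h => ?_⟩,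
    √(1 - 2 * θ * mA + θ ^ 2 * LA ^ 2) / (1 - θ * αΨ), ?_, ?_, fun w₁ _ w₂ _ =>
    norm_sub_le_of_hemivariational hALip hAmon hΨmon hθ hθα f (hTK w₁) (hTK w₂) (hT w₁) (hT w₂)⟩
  · have := norm_sub_le_of_hemivariational hALip hAmon hΨmon hθ hθα f hu' (hTK w) h (hT w)
    rw [sub_self w, norm_zero, mul_zero] at this
    exact sub_eq_zero.1 (norm_le_zero_iff.1 this)
  · exact div_nonneg (Real.sqrt_nonneg _) (by linarith)
  · rw [div_lt_one (by linarith), Real.sqrt_lt' (by linarith)]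
    have h := mul_lt_mul_of_pos_left hθL hθ
    nlinarith [sq_nonneg (θ * αΨ)]
end

section
/- Assume the integral VHI data hypotheses. Define Ψ : V → ℝ by Ψ(v) = ∫_Δ ψ(γ_ψ v(x)) dμ(x). Then Ψ is well defined, locally Lipschitz continuous on V, and satisfies Ψ⁰(v₁; v₂ − v₁) + Ψ⁰(v₂; v₁ − v₂) ≤ α_ψ c_Δ² ‖v₁ − v₂‖_V² for all v₁, v₂ ∈ V, where Ψ⁰ denotes the Clarke directional derivative of Ψ. -/
open Filter Topology MeasureTheory RealInnerProductSpace

theorem eventually_snd_pos {X : Type*} [TopologicalSpace X] (u : X) :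
    ∀ᶠ p : X × ℝ in 𝓝 u ×ˢ 𝓝[>] (0 : ℝ), 0 < p.2 :=
  tendsto_snd.eventually self_mem_nhdsWithin

section Clarke

variable {X : Type*} [NormedAddCommGroup X] [NormedSpace ℝ X] {f : X → ℝ} {u : X}

theorem tendsto_add_smul_nhds_prod (u v : X) :
    Tendsto (fun p : X × ℝ => p.1 + p.2 • v) (𝓝 u ×ˢ 𝓝[>] (0 : ℝ)) (𝓝 u) := by
  have h1 : Tendsto (fun p : X × ℝ => p.1) (𝓝 u ×ˢ 𝓝[>] (0 : ℝ)) (𝓝 u) := tendsto_fst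
  have h2 : Tendsto (fun p : X × ℝ => p.2) (𝓝 u ×ˢ 𝓝[>] (0 : ℝ)) (𝓝 0) :=
    tendsto_snd.mono_right nhdsWithin_le_nhds
  simpa using h1.add (h2.smul_const v)

/-- Difference quotients of a function that is Lipschitz near `u` are locally bounded. -/
theorem exists_eventually_abs_quotient_le
    (hf : ∃ (L : NNReal) (s : Set X), s ∈ 𝓝 u ∧ LipschitzOnWith L f s) (v : X) :
    ∃ M : ℝ, ∀ᶠ p : X × ℝ in 𝓝 u ×ˢ 𝓝[>] (0 : ℝ),
      |(f (p.1 + p.2 • v) - f p.1) / p.2| ≤ M := by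
  obtain ⟨L, s, hs, hL⟩ := hf
  refine ⟨L * ‖v‖, ?_⟩
  filter_upwards [(tendsto_add_smul_nhds_prod u v).eventually hs,
    (tendsto_fst (f := 𝓝 u) (g := 𝓝[>] (0 : ℝ))).eventually hs, eventually_snd_pos u]
    with p h1 h2 h3
  have h := hL.dist_le_mul _ h1 _ h2
  rw [Real.dist_eq, dist_eq_norm, add_sub_cancel_left, norm_smul, Real.norm_of_nonneg h3.le] at h
  rw [abs_div, abs_of_pos h3, div_le_iff₀ h3]
  linarith

theorem isBoundedUnder_le_quotient
    (hf : ∃ (L : NNReal) (s : Set X), s ∈ 𝓝 u ∧ LipschitzOnWith L f s) (v : X) :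
    IsBoundedUnder (· ≤ ·) (𝓝 u ×ˢ 𝓝[>] (0 : ℝ))
      (fun p : X × ℝ => (f (p.1 + p.2 • v) - f p.1) / p.2) := by
  obtain ⟨M, hM⟩ := exists_eventually_abs_quotient_le hf v
  exact isBoundedUnder_of_eventually_le (hM.mono fun p hp => (abs_le.1 hp).2)

theorem isCoboundedUnder_le_quotient
    (hf : ∃ (L : NNReal) (s : Set X), s ∈ 𝓝 u ∧ LipschitzOnWith L f s) (v : X) :
    IsCoboundedUnder (· ≤ ·) (𝓝 u ×ˢ 𝓝[>] (0 : ℝ))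
      (fun p : X × ℝ => (f (p.1 + p.2 • v) - f p.1) / p.2) := by
  obtain ⟨M, hM⟩ := exists_eventually_abs_quotient_le hf v
  exact (isBoundedUnder_of_eventually_ge
    (hM.mono fun p hp => (abs_le.1 hp).1)).isCoboundedUnder_le

theorem eventually_quotient_lt_of_clarkeDeriv_lt
    (hf : ∃ (L : NNReal) (s : Set X), s ∈ 𝓝 u ∧ LipschitzOnWith L f s) {v : X} {a : ℝ}
    (ha : clarkeDeriv f u v < a) :
    ∀ᶠ p : X × ℝ in 𝓝 u ×ˢ 𝓝[>] (0 : ℝ), (f (p.1 + p.2 • v) - f p.1) / p.2 < a :=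
  eventually_lt_of_limsup_lt ha (isBoundedUnder_le_quotient hf v)

theorem clarkeDeriv_le_of_eventually
    (hf : ∃ (L : NNReal) (s : Set X), s ∈ 𝓝 u ∧ LipschitzOnWith L f s) {v : X} {a : ℝ}
    (ha : ∀ᶠ p : X × ℝ in 𝓝 u ×ˢ 𝓝[>] (0 : ℝ), (f (p.1 + p.2 • v) - f p.1) / p.2 ≤ a) :
    clarkeDeriv f u v ≤ a :=
  limsup_le_of_le (isCoboundedUnder_le_quotient hf v) ha

theorem clarkeDeriv_zero : clarkeDeriv f u 0 = 0 := by
  simp [clarkeDeriv]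

theorem clarkeDeriv_add_le
    (hf : ∃ (L : NNReal) (s : Set X), s ∈ 𝓝 u ∧ LipschitzOnWith L f s) (v w : X) :
    clarkeDeriv f u (v + w) ≤ clarkeDeriv f u v + clarkeDeriv f u w := by
  refine le_of_forall_pos_le_add fun ε hε => ?_
  have hv := eventually_quotient_lt_of_clarkeDeriv_lt hf
    (show clarkeDeriv f u v < clarkeDeriv f u v + ε / 2 by linarith)
  have hw := eventually_quotient_lt_of_clarkeDeriv_lt hf
    (show clarkeDeriv f u w < clarkeDeriv f u w + ε / 2 by linarith)
  have ht : Tendsto (fun p : X × ℝ => (p.1 + p.2 • w, p.2)) (𝓝 u ×ˢ 𝓝[>] (0 : ℝ))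
      (𝓝 u ×ˢ 𝓝[>] (0 : ℝ)) := (tendsto_add_smul_nhds_prod u w).prodMk tendsto_snd
  refine clarkeDeriv_le_of_eventually hf ?_
  filter_upwards [ht.eventually hv, hw] with p h1 h2
  have h3 : p.1 + p.2 • (v + w) = p.1 + p.2 • w + p.2 • v := by rw [smul_add]; abel
  have h4 : (f (p.1 + p.2 • (v + w)) - f p.1) / p.2
      = (f (p.1 + p.2 • w + p.2 • v) - f (p.1 + p.2 • w)) / p.2
        + (f (p.1 + p.2 • w) - f p.1) / p.2 := by rw [h3]; ring
  rw [h4]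
  linarith

theorem clarkeDeriv_smul_le
    (hf : ∃ (L : NNReal) (s : Set X), s ∈ 𝓝 u ∧ LipschitzOnWith L f s) {t : ℝ} (ht : 0 < t)
    (v : X) : clarkeDeriv f u (t • v) ≤ t * clarkeDeriv f u v := by
  refine le_of_forall_pos_le_add fun ε hε => ?_
  have hv := eventually_quotient_lt_of_clarkeDeriv_lt hf
    (show clarkeDeriv f u v < clarkeDeriv f u v + ε / t by linarith [div_pos hε ht])
  have h0 : Tendsto (fun x : ℝ => x * t) (𝓝[>] (0 : ℝ)) (𝓝[>] (0 : ℝ)) := by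
    refine tendsto_nhdsWithin_iff.2 ⟨?_, ?_⟩
    · exact ((continuous_mul_const t).tendsto' 0 0 (by simp)).mono_left nhdsWithin_le_nhds
    · filter_upwards [self_mem_nhdsWithin] with x hx using mul_pos hx ht
  have hT : Tendsto (fun p : X × ℝ => (p.1, p.2 * t)) (𝓝 u ×ˢ 𝓝[>] (0 : ℝ))
      (𝓝 u ×ˢ 𝓝[>] (0 : ℝ)) := tendsto_fst.prodMk (h0.comp tendsto_snd)
  refine clarkeDeriv_le_of_eventually hf ?_
  filter_upwards [hT.eventually hv, eventually_snd_pos u] with p h1 h2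
  have h3 : (f (p.1 + p.2 • t • v) - f p.1) / p.2
      = t * ((f (p.1 + (p.2 * t) • v) - f p.1) / (p.2 * t)) := by
    rw [smul_smul]; field_simp
  rw [h3]
  calc _ ≤ t * (clarkeDeriv f u v + ε / t) := by gcongr
    _ = _ := by field_simp

theorem clarkeDeriv_smul
    (hf : ∃ (L : NNReal) (s : Set X), s ∈ 𝓝 u ∧ LipschitzOnWith L f s) {t : ℝ} (ht : 0 < t)
    (v : X) : clarkeDeriv f u (t • v) = t * clarkeDeriv f u v := by
  refine le_antisymm (clarkeDeriv_smul_le hf ht v) ?_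
  have h := clarkeDeriv_smul_le hf (inv_pos.2 ht) (t • v)
  rw [smul_smul, inv_mul_cancel₀ ht.ne', one_smul] at h
  calc t * clarkeDeriv f u v ≤ t * (t⁻¹ * clarkeDeriv f u (t • v)) := by gcongr
    _ = _ := by field_simp

/-- The Clarke derivative in a direction `v` is attained by a linear functional dominated by it. -/
theorem exists_linearMap_le_clarkeDeriv
    (hf : ∃ (L : NNReal) (s : Set X), s ∈ 𝓝 u ∧ LipschitzOnWith L f s) (v : X) (hv : v ≠ 0) :
    ∃ g : X →ₗ[ℝ] ℝ, g v = clarkeDeriv f u v ∧ ∀ w, g w ≤ clarkeDeriv f u w := by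
  obtain ⟨g, hg, hle⟩ := exists_extension_of_le_sublinear
    (LinearPMap.mkSpanSingleton v (clarkeDeriv f u v) hv) (clarkeDeriv f u)
    (fun c hc x => clarkeDeriv_smul hf hc x) (clarkeDeriv_add_le hf) (by
      rintro ⟨x, hx⟩
      obtain ⟨t, rfl⟩ := Submodule.mem_span_singleton.1 hx
      have hval : (LinearPMap.mkSpanSingleton v (clarkeDeriv f u v) hv) ⟨t • v, hx⟩
          = t * clarkeDeriv f u v := LinearPMap.mkSpanSingleton'_apply _ _ _ _ hx
      rw [hval]
      change _ ≤ clarkeDeriv f u (t • v)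
      rcases lt_trichotomy t 0 with ht | rfl | ht
      · have h1 := clarkeDeriv_add_le hf (t • v) ((-t) • v)
        rw [← add_smul, add_neg_cancel, zero_smul, clarkeDeriv_zero,
          clarkeDeriv_smul hf (neg_pos.2 ht)] at h1
        linarith
      · simp [clarkeDeriv_zero]
      · exact (clarkeDeriv_smul hf ht v).ge)
  refine ⟨g, ?_, hle⟩
  have h := hg ⟨v, Submodule.mem_span_singleton_self v⟩
  rw [LinearPMap.mkSpanSingleton_apply] at h
  exact h

end Clarke

/-- A bound on all Clarke subgradients bounds the Clarke derivative. -/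
theorem clarkeDeriv_le_of_subgradient_norm_le {E : Type*} [NormedAddCommGroup E]
    [InnerProductSpace ℝ E] [FiniteDimensional ℝ E] {f : E → ℝ} {z : E} {C : ℝ}
    (hf : ∃ (L : NNReal) (s : Set E), s ∈ 𝓝 z ∧ LipschitzOnWith L f s)
    (hC : ∀ ξ : E, (∀ w, ⟪ξ, w⟫ ≤ clarkeDeriv f z w) → ‖ξ‖ ≤ C) (v : E) :
    clarkeDeriv f z v ≤ C * ‖v‖ := by
  rcases eq_or_ne v 0 with rfl | hv
  · simp [clarkeDeriv_zero]
  obtain ⟨g, hgv, hg⟩ := exists_linearMap_le_clarkeDeriv hf v hv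
  have : CompleteSpace E := FiniteDimensional.complete ℝ E
  let ξ := (InnerProductSpace.toDual ℝ E).symm (LinearMap.toContinuousLinearMap g)
  have hξ : ∀ w, ⟪ξ, w⟫ = g w := fun w => by simp [ξ]
  rw [← hgv, ← hξ]
  calc ⟪ξ, v⟫ ≤ ‖ξ‖ * ‖v‖ := real_inner_le_norm _ _
    _ ≤ C * ‖v‖ := by
      gcongr
      exact hC ξ fun w => (hξ w).trans_le (hg w)

theorem continuous_of_locally_lipschitzOnWith {X : Type*} [PseudoMetricSpace X] {f : X → ℝ}
    (hf : ∀ z, ∃ (L : NNReal) (s : Set X), s ∈ 𝓝 z ∧ LipschitzOnWith L f s) : Continuous f :=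
  continuous_iff_continuousAt.2 fun z => by
    obtain ⟨L, s, hs, hL⟩ := hf z
    exact hL.continuousOn.continuousAt hs

/-- Mean value inequality: linear growth of the Clarke derivative yields a quadratic Lipschitz-type
estimate. -/
theorem sub_le_of_clarkeDeriv_le {E : Type*} [NormedAddCommGroup E] [NormedSpace ℝ E]
    {f : E → ℝ} {c : ℝ} (hc : 0 ≤ c)
    (hf : ∀ z, ∃ (L : NNReal) (s : Set E), s ∈ 𝓝 z ∧ LipschitzOnWith L f s)
    (hgrowth : ∀ z v, clarkeDeriv f z v ≤ c * (1 + ‖z‖) * ‖v‖) (a b : E) :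
    f a - f b ≤ c * (1 + ‖a‖ + ‖b‖) * ‖a - b‖ := by
  set C := c * (1 + ‖a‖ + ‖b‖) * ‖a - b‖ with hC
  have hcont := continuous_of_locally_lipschitzOnWith hf
  have hnorm : ∀ t ∈ Set.Ico (0 : ℝ) 1, ‖b + t • (a - b)‖ ≤ ‖a‖ + ‖b‖ := by
    intro t ht
    have h1 : b + t • (a - b) = (1 - t) • b + t • a := by module
    rw [h1]
    refine (norm_add_le _ _).trans ?_
    rw [norm_smul, norm_smul, Real.norm_of_nonneg ht.1,
      Real.norm_of_nonneg (by linarith [ht.2] : (0 : ℝ) ≤ 1 - t)]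
    nlinarith [norm_nonneg a, norm_nonneg b, ht.1, ht.2]
  have key := image_le_of_liminf_slope_right_le_deriv_boundary
    (f := fun t : ℝ => f (b + t • (a - b))) (a := 0) (b := 1)
    (by fun_prop) (B := fun t => f b + t * C) (B' := fun _ => C) (by simp)
    (by fun_prop)
    (fun x _ => by
      simpa using (((hasDerivAt_id x).mul_const C).const_add (f b)).hasDerivWithinAt)
    (by
      intro t ht r hr
      have h1 : clarkeDeriv f (b + t • (a - b)) (a - b) < r := by
        refine (hgrowth _ _).trans_lt (lt_of_le_of_lt ?_ hr)
        rw [hC]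
        have := hnorm t ht
        have h2 : 1 + ‖b + t • (a - b)‖ ≤ 1 + ‖a‖ + ‖b‖ := by linarith
        gcongr
      have h2 := eventually_quotient_lt_of_clarkeDeriv_lt (hf _) h1
      have h3 : Tendsto (fun z : ℝ => (b + t • (a - b), z - t)) (𝓝[>] t)
          (𝓝 (b + t • (a - b)) ×ˢ 𝓝[>] (0 : ℝ)) := by
        refine tendsto_const_nhds.prodMk (tendsto_nhdsWithin_iff.2 ⟨?_, ?_⟩)
        · exact ((continuous_sub_right t).tendsto' t 0 (by simp)).mono_left nhdsWithin_le_nhds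
        · filter_upwards [self_mem_nhdsWithin] with x hx using sub_pos.2 (Set.mem_Ioi.1 hx)
      refine (Eventually.mono (h3.eventually h2) fun z hz => ?_).frequently
      rw [slope_def_field]
      have h4 : b + z • (a - b) = b + t • (a - b) + (z - t) • (a - b) := by module
      rw [h4]
      exact hz)
  have h := key (Set.right_mem_Icc.2 zero_le_one)
  simp at h
  linarith

theorem abs_sub_le_of_clarkeDeriv_le {E : Type*} [NormedAddCommGroup E] [NormedSpace ℝ E]
    {f : E → ℝ} {c : ℝ} (hc : 0 ≤ c)
    (hf : ∀ z, ∃ (L : NNReal) (s : Set E), s ∈ 𝓝 z ∧ LipschitzOnWith L f s)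
    (hgrowth : ∀ z v, clarkeDeriv f z v ≤ c * (1 + ‖z‖) * ‖v‖) (a b : E) :
    |f a - f b| ≤ c * (1 + ‖a‖ + ‖b‖) * ‖a - b‖ := by
  refine abs_le.2 ⟨?_, sub_le_of_clarkeDeriv_le hc hf hgrowth a b⟩
  have h := sub_le_of_clarkeDeriv_le hc hf hgrowth b a
  rw [norm_sub_rev b a, add_right_comm] at h
  linarith

section Integral

variable {Δ : Type*} [MeasurableSpace Δ] {μ : Measure Δ}
  {E F : Type*} [NormedAddCommGroup E] [NormedAddCommGroup F]

theorem integrable_norm_mul_norm_Lp (f : Lp E 2 μ) (g : Lp F 2 μ) :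
    Integrable (fun x => ‖f x‖ * ‖g x‖) μ :=
  (Lp.memLp f).norm.integrable_mul (Lp.memLp g).norm

theorem integral_norm_mul_norm_Lp_le (f : Lp E 2 μ) (g : Lp F 2 μ) :
    ∫ x, ‖f x‖ * ‖g x‖ ∂μ ≤ ‖f‖ * ‖g‖ := by
  have hf := (Lp.memLp f).norm
  have hg := (Lp.memLp g).norm
  have h1 : ∫ x, ‖f x‖ * ‖g x‖ ∂μ = ⟪hf.toLp _, hg.toLp _⟫ := by
    rw [L2.inner_def]
    refine integral_congr_ae ?_
    filter_upwards [hf.coeFn_toLp, hg.coeFn_toLp] with x h1 h2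
    rw [h1, h2]
    simp [mul_comm]
  have h2 : ‖hf.toLp _‖ = ‖f‖ := by rw [Lp.norm_toLp, eLpNorm_norm, Lp.norm_def]
  have h3 : ‖hg.toLp _‖ = ‖g‖ := by rw [Lp.norm_toLp, eLpNorm_norm, Lp.norm_def]
  rw [h1, ← h2, ← h3]
  exact real_inner_le_norm _ _

theorem integral_norm_sq_Lp_le (f : Lp E 2 μ) : ∫ x, ‖f x‖ ^ 2 ∂μ ≤ ‖f‖ ^ 2 := by
  simpa only [sq] using integral_norm_mul_norm_Lp_le f f

theorem integrable_norm_sq_Lp (f : Lp E 2 μ) : Integrable (fun x => ‖f x‖ ^ 2) μ := by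
  simpa only [sq] using integrable_norm_mul_norm_Lp f f

/-- Fatou's lemma for upper limits of functions dominated by an `L¹`-convergent sequence. -/
theorem exists_integrable_le_of_le_integral {q b : ℕ → Δ → ℝ} {b' : Δ → ℝ} {C : ℝ}
    (hqm : ∀ n, StronglyMeasurable (q n)) (hbm : ∀ n, StronglyMeasurable (b n))
    (hq : ∀ n, Integrable (q n) μ) (hb : ∀ n, Integrable (b n) μ) (hb' : Integrable b' μ)
    (hqb : ∀ n, ∀ᵐ x ∂μ, q n x ≤ b n x)
    (hlim : ∀ᵐ x ∂μ, Tendsto (fun n => b n x) atTop (𝓝 (b' x)))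
    (hint : Tendsto (fun n => ∫ x, b n x ∂μ) atTop (𝓝 (∫ x, b' x ∂μ)))
    (hC : ∀ n, C ≤ ∫ x, q n x ∂μ) :
    ∃ G : Δ → ℝ, Integrable G μ ∧ C ≤ ∫ x, G x ∂μ ∧
      ∀ᵐ x ∂μ, ∀ d : ℝ, (∀ᶠ n in atTop, q n x < d) → G x ≤ d := by
  let H : Δ → ENNReal := fun x => liminf (fun n => ENNReal.ofReal (b n x - q n x)) atTop
  have hm : ∀ n, Measurable fun x => ENNReal.ofReal (b n x - q n x) := fun n =>
    ((hbm n).measurable.sub (hqm n).measurable).ennreal_ofReal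
  have hH : Measurable H := Measurable.liminf hm
  have hle : ∫⁻ x, H x ∂μ ≤ ENNReal.ofReal (∫ x, b' x ∂μ - C) := by
    refine (lintegral_liminf_le hm).trans ?_
    have h1 : Tendsto (fun n => ENNReal.ofReal (∫ x, b n x ∂μ - C)) atTop
        (𝓝 (ENNReal.ofReal (∫ x, b' x ∂μ - C))) :=
      (ENNReal.continuous_ofReal.tendsto _).comp (hint.sub_const C)
    rw [← h1.liminf_eq]
    refine liminf_le_liminf (Eventually.of_forall fun n => ?_)
    have h2 : Integrable (fun x => b n x - q n x) μ := (hb n).sub (hq n)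
    rw [← ofReal_integral_eq_lintegral_ofReal h2 ((hqb n).mono fun x hx => sub_nonneg.2 hx)]
    refine ENNReal.ofReal_le_ofReal ?_
    rw [integral_sub (hb n) (hq n)]
    linarith [hC n]
  have hne : ∫⁻ x, H x ∂μ ≠ ⊤ := ne_top_of_le_ne_top ENNReal.ofReal_ne_top hle
  have hfin : ∀ᵐ x ∂μ, H x < ⊤ := ae_lt_top hH hne
  have hHi : Integrable (fun x => (H x).toReal) μ :=
    integrable_toReal_of_lintegral_ne_top hH.aemeasurable hne
  have hnonneg : 0 ≤ ∫ x, b' x ∂μ - C := by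
    refine sub_nonneg.2 (ge_of_tendsto' hint fun n => (hC n).trans ?_)
    exact integral_mono_ae (hq n) (hb n) (hqb n)
  refine ⟨fun x => b' x - (H x).toReal, hb'.sub hHi, ?_, ?_⟩
  · rw [integral_sub hb' hHi, integral_toReal hH.aemeasurable hfin]
    have := ENNReal.toReal_le_of_le_ofReal hnonneg hle
    linarith
  · filter_upwards [hlim, hfin] with x hx hxf d hd
    have h1 : ENNReal.ofReal (b' x - d) ≤ H x := by
      have h2 : Tendsto (fun n => ENNReal.ofReal (b n x - d)) atTop
          (𝓝 (ENNReal.ofReal (b' x - d))) :=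
        (ENNReal.continuous_ofReal.tendsto _).comp (hx.sub_const d)
      rw [← h2.liminf_eq]
      refine liminf_le_liminf (hd.mono fun n hn => ?_)
      exact ENNReal.ofReal_le_ofReal (by linarith)
    have h3 := (ENNReal.ofReal_le_iff_le_toReal hxf.ne).1 h1
    linarith

variable [IsFiniteMeasure μ]

theorem integrable_norm_Lp (f : Lp E 2 μ) : Integrable (fun x => ‖f x‖) μ :=
  ((Lp.memLp f).integrable one_le_two).norm

theorem integral_norm_Lp_le (f : Lp E 2 μ) :
    ∫ x, ‖f x‖ ∂μ ≤ ‖Lp.const 2 μ (1 : ℝ)‖ * ‖f‖ := by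
  refine le_of_eq_of_le (integral_congr_ae ?_)
    (integral_norm_mul_norm_Lp_le (Lp.const 2 μ (1 : ℝ)) f)
  filter_upwards [Lp.coeFn_const (p := 2) (μ := μ) (1 : ℝ)] with x hx
  rw [hx]
  simp

variable {ψ : E → ℝ} {c : ℝ}

theorem integrable_comp_Lp (hψ : Continuous ψ)
    (hlip : ∀ a b, |ψ a - ψ b| ≤ c * (1 + ‖a‖ + ‖b‖) * ‖a - b‖) (f : Lp E 2 μ) :
    Integrable (fun x => ψ (f x)) μ := by
  have hb : Integrable (fun x => |ψ 0| + c * (‖f x‖ + ‖f x‖ ^ 2)) μ :=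
    (integrable_const _).add (((integrable_norm_Lp f).add (integrable_norm_sq_Lp f)).const_mul c)
  refine hb.mono' (hψ.comp_aestronglyMeasurable (Lp.aestronglyMeasurable f))
    (Eventually.of_forall fun x => ?_)
  have h := hlip (f x) 0
  rw [norm_zero, sub_zero] at h
  have h2 := abs_sub_abs_le_abs_sub (ψ (f x)) (ψ 0)
  rw [Real.norm_eq_abs]
  nlinarith

theorem abs_integral_comp_sub_le (hc : 0 ≤ c) (hψ : Continuous ψ)
    (hlip : ∀ a b, |ψ a - ψ b| ≤ c * (1 + ‖a‖ + ‖b‖) * ‖a - b‖) (f g : Lp E 2 μ) :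
    |∫ x, ψ (f x) ∂μ - ∫ x, ψ (g x) ∂μ|
      ≤ c * (‖Lp.const 2 μ (1 : ℝ)‖ + ‖f‖ + ‖g‖) * ‖f - g‖ := by
  have hi1 := integrable_norm_Lp (f - g)
  have hi2 := integrable_norm_mul_norm_Lp f (f - g)
  have hi3 := integrable_norm_mul_norm_Lp g (f - g)
  have hi12 : Integrable (fun x => ‖(f - g) x‖ + ‖f x‖ * ‖(f - g) x‖) μ := hi1.add hi2
  rw [← integral_sub (integrable_comp_Lp hψ hlip f) (integrable_comp_Lp hψ hlip g)]
  calc |∫ x, (ψ (f x) - ψ (g x)) ∂μ| ≤ ∫ x, |ψ (f x) - ψ (g x)| ∂μ :=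
        abs_integral_le_integral_abs
    _ ≤ ∫ x, c * (‖(f - g) x‖ + ‖f x‖ * ‖(f - g) x‖ + ‖g x‖ * ‖(f - g) x‖) ∂μ := by
        refine integral_mono_ae
          ((integrable_comp_Lp hψ hlip f).sub (integrable_comp_Lp hψ hlip g)).abs
          ((hi12.add hi3).const_mul c) ?_
        filter_upwards [Lp.coeFn_sub f g] with x hx
        rw [hx]
        refine (hlip _ _).trans (le_of_eq ?_)
        simp only [Pi.sub_apply]
        ring
    _ = c * (∫ x, ‖(f - g) x‖ ∂μ + ∫ x, ‖f x‖ * ‖(f - g) x‖ ∂μ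
          + ∫ x, ‖g x‖ * ‖(f - g) x‖ ∂μ) := by
        rw [integral_const_mul, integral_add hi12 hi3, integral_add hi1 hi2]
    _ ≤ c * (‖Lp.const 2 μ (1 : ℝ)‖ * ‖f - g‖ + ‖f‖ * ‖f - g‖ + ‖g‖ * ‖f - g‖) := by
        gcongr
        · exact integral_norm_Lp_le _
        · exact integral_norm_mul_norm_Lp_le _ _
        · exact integral_norm_mul_norm_Lp_le _ _
    _ = _ := by ring

variable [NormedSpace ℝ E]

theorem exists_integrable_le_clarkeDeriv_of_seq (hc : 0 ≤ c)
    (hψ : ∀ z, ∃ (L : NNReal) (s : Set E), s ∈ 𝓝 z ∧ LipschitzOnWith L ψ s)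
    (hlip : ∀ a b, |ψ a - ψ b| ≤ c * (1 + ‖a‖ + ‖b‖) * ‖a - b‖)
    {f : ℕ → Lp E 2 μ} {f' g : Lp E 2 μ} {l : ℕ → ℝ} {C : ℝ}
    (hf : Tendsto f atTop (𝓝 f')) (hl : Tendsto l atTop (𝓝[>] 0)) (hl0 : ∀ n, 0 < l n)
    (hC : ∀ n, C ≤ (∫ x, ψ ((f n + l n • g) x) ∂μ - ∫ x, ψ (f n x) ∂μ) / l n) :
    ∃ G : Δ → ℝ, Integrable G μ ∧ C ≤ ∫ x, G x ∂μ ∧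
      ∀ᵐ x ∂μ, G x ≤ clarkeDeriv ψ (f' x) (g x) := by
  wlog hae : ∀ᵐ x ∂μ, Tendsto (fun n => f n x) atTop (𝓝 (f' x)) generalizing f l
  · obtain ⟨ns, hns, hae'⟩ := (tendstoInMeasure_of_tendsto_Lp hf).exists_seq_tendsto_ae
    exact this (hf.comp hns.tendsto_atTop) (hl.comp hns.tendsto_atTop) (fun n => hl0 _)
      (fun n => hC _) hae'
  have hcont := continuous_of_locally_lipschitzOnWith hψ
  have hl' : Tendsto l atTop (𝓝 0) := hl.mono_right nhdsWithin_le_nhds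
  have hadd : ∀ n, ∀ᵐ x ∂μ, (f n + l n • g) x = f n x + l n • g x := fun n => by
    filter_upwards [Lp.coeFn_add (f n) (l n • g), Lp.coeFn_smul (l n) g] with x h1 h2
    rw [h1, Pi.add_apply, h2, Pi.smul_apply]
  have hψm : ∀ h : Lp E 2 μ, StronglyMeasurable fun x => ψ (h x) := fun h =>
    hcont.comp_stronglyMeasurable (Lp.stronglyMeasurable h)
  have hbi : ∀ (h : Lp E 2 μ) (t : ℝ),
      Integrable (fun x => c * (‖g x‖ + 2 * (‖h x‖ * ‖g x‖) + t * ‖g x‖ ^ 2)) μ := fun h t =>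
    (((integrable_norm_Lp g).add ((integrable_norm_mul_norm_Lp h g).const_mul 2)).add
      ((integrable_norm_sq_Lp g).const_mul t)).const_mul c
  obtain ⟨G, hG, hCG, hGd⟩ := exists_integrable_le_of_le_integral (μ := μ) (C := C)
    (q := fun n x => (ψ ((f n + l n • g) x) - ψ (f n x)) / l n)
    (b := fun n x => c * (‖g x‖ + 2 * (‖f n x‖ * ‖g x‖) + l n * ‖g x‖ ^ 2))
    (b' := fun x => c * (‖g x‖ + 2 * (‖f' x‖ * ‖g x‖) + 0 * ‖g x‖ ^ 2))
    (fun n => ((hψm _).sub (hψm _)).div stronglyMeasurable_const)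
    (fun n => by
      have h1 := (Lp.stronglyMeasurable g).norm
      have h2 := (Lp.stronglyMeasurable (f n)).norm
      exact ((h1.add ((h2.mul h1).const_mul 2)).add ((h1.pow 2).const_mul _)).const_mul c)
    (fun n => ((integrable_comp_Lp hcont hlip _).sub
      (integrable_comp_Lp hcont hlip _)).div_const _)
    (fun n => hbi _ _) (hbi f' 0)
    (fun n => by
      filter_upwards [hadd n] with x hx
      rw [hx, div_le_iff₀ (hl0 n)]
      refine (le_abs_self _).trans ((hlip _ _).trans ?_)
      rw [add_sub_cancel_left, norm_smul, Real.norm_of_nonneg (hl0 n).le]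
      have h1 : ‖f n x + l n • g x‖ ≤ ‖f n x‖ + l n * ‖g x‖ := by
        refine (norm_add_le _ _).trans ?_
        rw [norm_smul, Real.norm_of_nonneg (hl0 n).le]
      have h2 := (hl0 n).le
      calc _ ≤ c * (1 + (‖f n x‖ + l n * ‖g x‖) + ‖f n x‖) * (l n * ‖g x‖) := by gcongr
        _ = _ := by ring)
    (by
      filter_upwards [hae] with x hx
      exact (((hx.norm.mul_const _).const_mul 2).const_add _ |>.add
        (hl'.mul_const _)).const_mul c)
    (by
      have hI : ∀ (h : Lp E 2 μ) (t : ℝ),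
          ∫ x, c * (‖g x‖ + 2 * (‖h x‖ * ‖g x‖) + t * ‖g x‖ ^ 2) ∂μ
            = c * (∫ x, ‖g x‖ ∂μ + 2 * ∫ x, ‖h x‖ * ‖g x‖ ∂μ + t * ∫ x, ‖g x‖ ^ 2 ∂μ) := by
        intro h t
        have h1 := integrable_norm_Lp g
        have h2 := (integrable_norm_mul_norm_Lp h g).const_mul 2
        have h12 : Integrable (fun x => ‖g x‖ + 2 * (‖h x‖ * ‖g x‖)) μ := h1.add h2
        rw [integral_const_mul, integral_add h12 ((integrable_norm_sq_Lp g).const_mul t),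
          integral_add h1 h2, integral_const_mul, integral_const_mul]
      simp only [hI]
      refine ((Tendsto.const_mul 2 ?_).const_add _ |>.add (hl'.mul_const _)).const_mul c
      rw [tendsto_iff_norm_sub_tendsto_zero]
      have h0 : Tendsto (fun n => ‖f n - f'‖ * ‖g‖) atTop (𝓝 0) := by
        simpa using (tendsto_iff_norm_sub_tendsto_zero.1 hf).mul_const ‖g‖
      refine squeeze_zero (fun n => norm_nonneg _) (fun n => ?_) h0
      rw [← integral_sub (integrable_norm_mul_norm_Lp _ _) (integrable_norm_mul_norm_Lp _ _)]
      refine (norm_integral_le_integral_norm _).trans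
        (le_trans ?_ (integral_norm_mul_norm_Lp_le (f n - f') g))
      refine integral_mono_ae ((integrable_norm_mul_norm_Lp _ _).sub
        (integrable_norm_mul_norm_Lp _ _)).norm (integrable_norm_mul_norm_Lp _ _) ?_
      filter_upwards [Lp.coeFn_sub (f n) f'] with x hx
      rw [hx, ← sub_mul, norm_mul, norm_norm, Pi.sub_apply]
      gcongr
      exact abs_norm_sub_norm_le _ _)
    (fun n => by
      rw [integral_div, integral_sub (integrable_comp_Lp hcont hlip _)
        (integrable_comp_Lp hcont hlip _)]
      exact hC n)
  refine ⟨G, hG, hCG, ?_⟩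
  filter_upwards [hGd, hae, ae_all_iff.2 hadd] with x hx hfx hax
  refine le_of_forall_gt_imp_ge_of_dense fun d hd => hx d ?_
  have h1 := eventually_quotient_lt_of_clarkeDeriv_lt (hψ (f' x)) hd
  filter_upwards [(hfx.prodMk hl).eventually h1] with n hn
  rw [hax n]
  exact hn

end Integral

/-- Below the Clarke derivative of an integral functional there are integrals of minorants of the
pointwise Clarke derivative. -/
theorem exists_integrable_le_clarkeDeriv {V : Type*} [NormedAddCommGroup V] [NormedSpace ℝ V]
    {Δ : Type*} [MeasurableSpace Δ] {μ : Measure Δ} [IsFiniteMeasure μ]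
    {E : Type*} [NormedAddCommGroup E] [NormedSpace ℝ E] (γ : V →L[ℝ] Lp E 2 μ)
    {ψ : E → ℝ} {c : ℝ} (hc : 0 ≤ c)
    (hψ : ∀ z, ∃ (L : NNReal) (s : Set E), s ∈ 𝓝 z ∧ LipschitzOnWith L ψ s)
    (hlip : ∀ a b, |ψ a - ψ b| ≤ c * (1 + ‖a‖ + ‖b‖) * ‖a - b‖)
    {Ψ : V → ℝ} (hΨ : ∀ v, Ψ v = ∫ x, ψ (γ v x) ∂μ) {u v : V}
    (hΨlip : ∃ (L : NNReal) (s : Set V), s ∈ 𝓝 u ∧ LipschitzOnWith L Ψ s)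
    {C : ℝ} (hC : C < clarkeDeriv Ψ u v) :
    ∃ G : Δ → ℝ, Integrable G μ ∧ C ≤ ∫ x, G x ∂μ ∧
      ∀ᵐ x ∂μ, G x ≤ clarkeDeriv ψ (γ u x) (γ v x) := by
  have h1 := (frequently_lt_of_lt_limsup (isCoboundedUnder_le_quotient hΨlip v) hC).and_eventually
    (eventually_snd_pos u)
  obtain ⟨p, hp, hpC⟩ := exists_seq_forall_of_frequently h1
  have hp1 : Tendsto (fun n => γ (p n).1) atTop (𝓝 (γ u)) :=
    (γ.continuous.tendsto u).comp (tendsto_fst.comp hp)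
  refine exists_integrable_le_clarkeDeriv_of_seq hc hψ hlip hp1 (tendsto_snd.comp hp)
    (fun n => (hpC n).2) fun n => ?_
  have h2 := (hpC n).1
  rw [hΨ, hΨ, map_add, map_smul] at h2
  exact h2.le

theorem stmt11 {V : Type*} [NormedAddCommGroup V] [InnerProductSpace ℝ V] [CompleteSpace V]
    {Δ : Type*} [MeasurableSpace Δ] (μ : Measure Δ) [IsFiniteMeasure μ]
    (m : ℕ) (hm : 1 ≤ m)
    (γψ : V →L[ℝ] (Lp (EuclideanSpace ℝ (Fin m)) 2 μ))
    (cΔ : ℝ) (hcΔ : 0 < cΔ) (hγ : ∀ v : V, ‖γψ v‖ ≤ cΔ * ‖v‖)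
    (ψ : EuclideanSpace ℝ (Fin m) → ℝ)
    (hψlip : ∀ z : EuclideanSpace ℝ (Fin m),
      ∃ (L : NNReal) (s : Set (EuclideanSpace ℝ (Fin m))), s ∈ 𝓝 z ∧ LipschitzOnWith L ψ s)
    (cψ : ℝ) (hcψ : 0 ≤ cψ)
    (hψgrowth : ∀ z ξ : EuclideanSpace ℝ (Fin m),
      (∀ w, ⟪ξ, w⟫ ≤ clarkeDeriv ψ z w) → ‖ξ‖ ≤ cψ * (1 + ‖z‖))
    (αψ : ℝ) (hαψ : 0 ≤ αψ)
    (hψmon : ∀ z₁ z₂ : EuclideanSpace ℝ (Fin m),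
      clarkeDeriv ψ z₁ (z₂ - z₁) + clarkeDeriv ψ z₂ (z₁ - z₂) ≤ αψ * ‖z₁ - z₂‖ ^ 2)
    (Ψ : V → ℝ) (hΨdef : ∀ v : V, Ψ v = ∫ x, ψ ((γψ v) x) ∂μ) :
    (∀ v : V, Integrable (fun x => ψ ((γψ v) x)) μ) ∧
    (∀ u : V, ∃ (L : NNReal) (s : Set V), s ∈ 𝓝 u ∧ LipschitzOnWith L Ψ s) ∧
    (∀ v₁ v₂ : V,
      clarkeDeriv Ψ v₁ (v₂ - v₁) + clarkeDeriv Ψ v₂ (v₁ - v₂) ≤ αψ * cΔ ^ 2 * ‖v₁ - v₂‖ ^ 2) := by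
  have hcont := continuous_of_locally_lipschitzOnWith hψlip
  have hlip := abs_sub_le_of_clarkeDeriv_le hcψ hψlip fun z =>
    clarkeDeriv_le_of_subgradient_norm_le (hψlip z) (hψgrowth z)
  have hΨlip : ∀ u : V, ∃ (L : NNReal) (s : Set V), s ∈ 𝓝 u ∧ LipschitzOnWith L Ψ s := by
    intro u
    set K := ‖Lp.const 2 μ (1 : ℝ)‖
    have hL : 0 ≤ cψ * (K + cΔ * (‖u‖ + 1) + cΔ * (‖u‖ + 1)) * cΔ := by positivity
    have hball : ∀ x ∈ Metric.ball u 1, ‖γψ x‖ ≤ cΔ * (‖u‖ + 1) := fun x hx =>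
      (hγ x).trans (by gcongr; exact (norm_lt_of_mem_ball hx).le)
    refine ⟨(cψ * (K + cΔ * (‖u‖ + 1) + cΔ * (‖u‖ + 1)) * cΔ).toNNReal,
      Metric.ball u 1, Metric.ball_mem_nhds u one_pos,
      LipschitzOnWith.of_dist_le_mul fun x hx y hy => ?_⟩
    rw [Real.dist_eq, dist_eq_norm, hΨdef, hΨdef]
    refine (abs_integral_comp_sub_le hcψ hcont hlip _ _).trans ?_
    rw [← map_sub, Real.coe_toNNReal _ hL, mul_assoc _ cΔ]
    gcongr
    · exact hball x hx
    · exact hball y hy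
    · exact hγ _
  refine ⟨fun v => integrable_comp_Lp hcont hlip _, hΨlip, fun v₁ v₂ => ?_⟩
  refine le_of_forall_pos_le_add fun ε hε => ?_
  obtain ⟨G₁, hG₁, hC₁, hle₁⟩ := exists_integrable_le_clarkeDeriv γψ hcψ hψlip hlip hΨdef
    (hΨlip v₁) (sub_lt_self (clarkeDeriv Ψ v₁ (v₂ - v₁)) (half_pos hε))
  obtain ⟨G₂, hG₂, hC₂, hle₂⟩ := exists_integrable_le_clarkeDeriv γψ hcψ hψlip hlip hΨdef
    (hΨlip v₂) (sub_lt_self (clarkeDeriv Ψ v₂ (v₁ - v₂)) (half_pos hε))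
  have h1 : ∫ x, G₁ x ∂μ + ∫ x, G₂ x ∂μ ≤ αψ * cΔ ^ 2 * ‖v₁ - v₂‖ ^ 2 := calc
    ∫ x, G₁ x ∂μ + ∫ x, G₂ x ∂μ = ∫ x, (G₁ x + G₂ x) ∂μ := (integral_add hG₁ hG₂).symm
    _ ≤ ∫ x, αψ * ‖γψ (v₁ - v₂) x‖ ^ 2 ∂μ := by
      refine integral_mono_ae (hG₁.add hG₂) ((integrable_norm_sq_Lp _).const_mul αψ) ?_
      filter_upwards [hle₁, hle₂, Lp.coeFn_sub (γψ v₁) (γψ v₂), Lp.coeFn_sub (γψ v₂) (γψ v₁)]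
        with x h1 h2 h3 h4
      rw [map_sub, h4, Pi.sub_apply] at h1
      rw [map_sub, h3, Pi.sub_apply] at h2
      rw [map_sub, h3, Pi.sub_apply]
      exact (add_le_add h1 h2).trans (hψmon _ _)
    _ ≤ αψ * (cΔ * ‖v₁ - v₂‖) ^ 2 := by
      rw [integral_const_mul]
      gcongr
      refine (integral_norm_sq_Lp_le _).trans ?_
      gcongr
      exact hγ _
    _ = _ := by ring
  linarith
end
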